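/- Let K be a field of characteristic zero equipped with a derivation δ : K → K, let t ∈ K with δ(t) = 1, and let v₁, v₂, v₃, v₄ ∈ K be constants (δ(vᵢ) = 0) with v₁ + v₂ + v₃ + v₄ = 0. Suppose Q, P ∈ K with Q ≠ 1 satisfy t·δ(Q) = 2Q(Q−1)²P + (3v₁ + v₂)Q² − (t + 4v₁)Q + v₁ − v₂. Define q = Q/(Q−1) and p = −(Q−1)²·P + (v₃ − v₁)(Q−1). Then t·δ(q) = 2q²p − 2qp + t·q² − t·q + (v₁ − v₂ − v₃ + v₄)·q + v₂ − v₁. -/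

import Mathlib

/-!
The substitution `q = Q/(Q − 1)` satisfies `δ q = −δ Q/(Q − 1)²` and `q² − q = Q/(Q − 1)²`. The
second identity turns `2q²p − 2qp` into `−2QP + 2(v₃ − v₁)q`. Since `v₁ + v₂ + v₃ + v₄ = 0`, both
sides of the transformed equation then reduce to
`−2QP + tQ/(Q − 1)² − 2(v₁ + v₂)q + v₂ − v₁`, on the left by a partial fraction expansion at
`Q = 1`.
-/

section Derivation

/-- An additive map satisfying the Leibniz rule, as a bundled `ℤ`-linear derivation; this gives
access to the quotient rule for bundled derivations. -/
def derivationOfLeibniz {A : Type*} [CommRing A] (δ : A → A)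
    (hadd : ∀ a b : A, δ (a + b) = δ a + δ b)
    (hleib : ∀ a b : A, δ (a * b) = a * δ b + δ a * b) : Derivation ℤ A A :=
  .mk' (AddMonoidHom.mk' δ hadd).toIntLinearMap fun a b ↦
    (hleib a b).trans (congrArg (a * δ b + ·) (mul_comm (δ a) b))

theorem derivation_div_sub_one {R K M : Type*} [CommRing R] [Field K] [Algebra R K]
    [AddCommGroup M] [Module K M] [Module R M] (D : Derivation R K M) (x : K) :
    D (x / (x - 1)) = -((x - 1) ^ 2)⁻¹ • D x := by
  have hnumerator : (x - 1) • D x - x • D (x - 1) = -D x := by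
    rw [map_sub, D.map_one_eq_zero, sub_zero, sub_smul, one_smul, sub_sub_cancel_left]
  rw [D.leibniz_div, hnumerator, inv_pow, smul_neg, neg_smul]

end Derivation

section Substitution

variable {K : Type*} [Field K]

theorem div_sub_one_sq_sub_self {x : K} (hx : x ≠ 1) :
    (x / (x - 1)) ^ 2 - x / (x - 1) = x / (x - 1) ^ 2 := by
  have hx' : x - 1 ≠ 0 := sub_ne_zero.mpr hx
  field_simp
  ring

theorem painleveV_partial_fractions (t v₁ v₂ P : K) {Q : K} (hQ1 : Q ≠ 1) :
    -((Q - 1) ^ 2)⁻¹ * (2 * Q * (Q - 1) ^ 2 * P + (3 * v₁ + v₂) * Q ^ 2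
        - (t + 4 * v₁) * Q + v₁ - v₂)
      = -2 * Q * P + t * (Q / (Q - 1) ^ 2) - 2 * (v₁ + v₂) * (Q / (Q - 1)) + v₂ - v₁ := by
  have hQ : Q - 1 ≠ 0 := sub_ne_zero.mpr hQ1
  field_simp
  ring

theorem painleveV_transformed_eq_partial_fractions (t P : K) {v₁ v₂ v₃ v₄ Q : K}
    (hsum : v₁ + v₂ + v₃ + v₄ = 0) (hQ1 : Q ≠ 1) :
    2 * (Q / (Q - 1)) ^ 2 * (-(Q - 1) ^ 2 * P + (v₃ - v₁) * (Q - 1))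
        - 2 * (Q / (Q - 1)) * (-(Q - 1) ^ 2 * P + (v₃ - v₁) * (Q - 1))
        + t * (Q / (Q - 1)) ^ 2 - t * (Q / (Q - 1))
        + (v₁ - v₂ - v₃ + v₄) * (Q / (Q - 1)) + v₂ - v₁
      = -2 * Q * P + t * (Q / (Q - 1) ^ 2) - 2 * (v₁ + v₂) * (Q / (Q - 1)) + v₂ - v₁ := by
  have hquad := div_sub_one_sq_sub_self hQ1
  have hmomentum : Q / (Q - 1) ^ 2 * (-(Q - 1) ^ 2 * P + (v₃ - v₁) * (Q - 1))
      = -Q * P + (v₃ - v₁) * (Q / (Q - 1)) := by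
    have hQ : Q - 1 ≠ 0 := sub_ne_zero.mpr hQ1
    field_simp
  set q := Q / (Q - 1)
  set p := -(Q - 1) ^ 2 * P + (v₃ - v₁) * (Q - 1)
  calc 2 * q ^ 2 * p - 2 * q * p + t * q ^ 2 - t * q + (v₁ - v₂ - v₃ + v₄) * q + v₂ - v₁
      = 2 * ((q ^ 2 - q) * p) + t * (q ^ 2 - q) + (v₁ - v₂ - v₃ + v₄) * q + v₂ - v₁ := by ring
    _ = 2 * (-Q * P + (v₃ - v₁) * q) + t * (Q / (Q - 1) ^ 2)
          + (v₁ - v₂ - v₃ + v₄) * q + v₂ - v₁ := by rw [hquad, hmomentum]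
    _ = -2 * Q * P + t * (Q / (Q - 1) ^ 2) - 2 * (v₁ + v₂) * q + v₂ - v₁ := by
      linear_combination q * hsum

end Substitution

theorem painleveV_substitution_first_general
    {R K : Type*} [CommRing R] [Field K] [Algebra R K] (D : Derivation R K K)
    {t v₁ v₂ v₃ v₄ Q P : K} (hsum : v₁ + v₂ + v₃ + v₄ = 0) (hQ1 : Q ≠ 1)
    (hQ : t * D Q = 2 * Q * (Q - 1) ^ 2 * P + (3 * v₁ + v₂) * Q ^ 2
      - (t + 4 * v₁) * Q + v₁ - v₂) :
    t * D (Q / (Q - 1))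
      = 2 * (Q / (Q - 1)) ^ 2 * (-(Q - 1) ^ 2 * P + (v₃ - v₁) * (Q - 1))
        - 2 * (Q / (Q - 1)) * (-(Q - 1) ^ 2 * P + (v₃ - v₁) * (Q - 1))
        + t * (Q / (Q - 1)) ^ 2 - t * (Q / (Q - 1))
        + (v₁ - v₂ - v₃ + v₄) * (Q / (Q - 1)) + v₂ - v₁ := by
  rw [derivation_div_sub_one, smul_eq_mul, mul_left_comm, hQ,
    painleveV_partial_fractions t v₁ v₂ P hQ1,
    painleveV_transformed_eq_partial_fractions t P hsum hQ1]

/-- Under the substitution `q = Q/(Q−1)`, `p = −(Q−1)²P + (v₃−v₁)(Q−1)`, the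
first equation of the Painlevé V Hamiltonian system transforms to
`t·q' = 2q²p − 2qp + tq² − tq + (v₁−v₂−v₃+v₄)q + v₂ − v₁`. -/
theorem painleveV_substitution_first
    {K : Type*} [Field K] [CharZero K] (δ : K → K)
    (hadd : ∀ a b : K, δ (a + b) = δ a + δ b)
    (hleib : ∀ a b : K, δ (a * b) = a * δ b + δ a * b)
    (t : K) (ht : δ t = 1)
    (v₁ v₂ v₃ v₄ : K) (hv₁ : δ v₁ = 0) (hv₂ : δ v₂ = 0) (hv₃ : δ v₃ = 0)
    (hv₄ : δ v₄ = 0) (hsum : v₁ + v₂ + v₃ + v₄ = 0)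
    (Q P : K) (hQ1 : Q ≠ 1)
    (hQ : t * δ Q = 2 * Q * (Q - 1) ^ 2 * P + (3 * v₁ + v₂) * Q ^ 2
      - (t + 4 * v₁) * Q + v₁ - v₂) :
    t * δ (Q / (Q - 1))
      = 2 * (Q / (Q - 1)) ^ 2 * (-(Q - 1) ^ 2 * P + (v₃ - v₁) * (Q - 1))
        - 2 * (Q / (Q - 1)) * (-(Q - 1) ^ 2 * P + (v₃ - v₁) * (Q - 1))
        + t * (Q / (Q - 1)) ^ 2 - t * (Q / (Q - 1))
        + (v₁ - v₂ - v₃ + v₄) * (Q / (Q - 1)) + v₂ - v₁ := by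
  exact painleveV_substitution_first_general (derivationOfLeibniz δ hadd hleib) hsum hQ1 hQ
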